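/- arXiv:2110.06670 — 3 statements merged into one kernel-verified Lean document; each statement's English description precedes it below -/
import Mathlib

section
/- Let v₀ : ℝ³ → ℝ be a smooth function. The following are equivalent: (i) X²v₀ = Y²v₀ and XYv₀ = −YXv₀ on ℝ³; (ii) Z²v₀ = 0 on ℝ³; (iii) there exist real constants c₁,…,c₈ such that v₀(x,y,t) = c₁(x⁴ + 2x²y² + y⁴ + t²) + c₂(ty − xy² − x³) + c₃(tx + x²y + y³) + c₄(x² + y²) + c₅x + c₆y + c₇t + c₈. -/
noncomputable section

open Complex

/-- The underlying space of the first Heisenberg group: ℝ³ with coordinates (x, y, t). -/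
abbrev Heis : Type := ℝ × ℝ × ℝ

/-- The left-invariant vector field X = ∂/∂x + 2y ∂/∂t, as a derivation. -/
def XD {E : Type*} [NormedAddCommGroup E] [NormedSpace ℝ E] (u : Heis → E) (p : Heis) : E :=
  fderiv ℝ u p (1, 0, 2 * p.2.1)

/-- The left-invariant vector field Y = ∂/∂y − 2x ∂/∂t, as a derivation. -/
def YD {E : Type*} [NormedAddCommGroup E] [NormedSpace ℝ E] (u : Heis → E) (p : Heis) : E :=
  fderiv ℝ u p (0, 1, -(2 * p.1))

/-- The vector field T = ∂/∂t, as a derivation. -/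
def TD {E : Type*} [NormedAddCommGroup E] [NormedSpace ℝ E] (u : Heis → E) (p : Heis) : E :=
  fderiv ℝ u p (0, 0, 1)

/-- Z = (X − iY)/2. -/
def ZD (u : Heis → ℂ) (p : Heis) : ℂ := (XD u p - Complex.I * YD u p) / 2

/-- Z̄ = (X + iY)/2. -/
def ZbD (u : Heis → ℂ) (p : Heis) : ℂ := (XD u p + Complex.I * YD u p) / 2

/-- The complexification F = f₁ + i f₂ of the horizontal components. -/
def CF (f1 f2 : Heis → ℝ) : Heis → ℂ := fun p => (f1 p : ℂ) + (f2 p : ℂ) * Complex.I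

/-- Complexification of a real-valued function. -/
def Cplx (u : Heis → ℝ) : Heis → ℂ := fun p => (u p : ℂ)

/-- The horizontal Jacobian J_F = Xf₁·Yf₂ − Yf₁·Xf₂. -/
def JF (f1 f2 : Heis → ℝ) (p : Heis) : ℝ := XD f1 p * YD f2 p - YD f1 p * XD f2 p

/-- The contact equations on Ω. -/
def ContactOn (f1 f2 f3 : Heis → ℝ) (Ω : Set Heis) : Prop :=
  ∀ p ∈ Ω, XD f3 p - 2 * f2 p * XD f1 p + 2 * f1 p * XD f2 p = 0 ∧
           YD f3 p - 2 * f2 p * YD f1 p + 2 * f1 p * YD f2 p = 0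

/-- f = (f₁,f₂,f₃) is conformal on Ω: smooth, contact, J_F > 0, and the conformality
equations hold. -/
def ConformalOn (f1 f2 f3 : Heis → ℝ) (Ω : Set Heis) : Prop :=
  ContDiffOn ℝ (⊤ : ℕ∞) f1 Ω ∧ ContDiffOn ℝ (⊤ : ℕ∞) f2 Ω ∧ ContDiffOn ℝ (⊤ : ℕ∞) f3 Ω ∧
  ContactOn f1 f2 f3 Ω ∧ (∀ p ∈ Ω, 0 < JF f1 f2 p) ∧
  ∀ p ∈ Ω, (XD f1 p) ^ 2 + (XD f2 p) ^ 2 = (YD f1 p) ^ 2 + (YD f2 p) ^ 2 ∧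
           XD f1 p * YD f1 p + XD f2 p * YD f2 p = 0

/-- The sub-Laplacian Δ_H = X² + Y². -/
def LapH {E : Type*} [NormedAddCommGroup E] [NormedSpace ℝ E] (u : Heis → E) (p : Heis) : E :=
  XD (XD u) p + YD (YD u) p

/-- The CR Schwarzian derivative S_CR(f) = (1/2)·J_F·Z²(J_F⁻¹). -/
def SCR (f1 f2 : Heis → ℝ) (p : Heis) : ℂ :=
  (1 / 2 : ℂ) * (JF f1 f2 p : ℂ) * ZD (ZD (fun q => (((JF f1 f2 q)⁻¹ : ℝ) : ℂ))) p

/-- The classical type Schwarzian S_CL(f) = Z³F/ZF − (3/2)(Z²F/ZF)². -/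
def SCL (f1 f2 : Heis → ℝ) (p : Heis) : ℂ :=
  ZD (ZD (ZD (CF f1 f2))) p / ZD (CF f1 f2) p
    - (3 / 2 : ℂ) * (ZD (ZD (CF f1 f2)) p / ZD (CF f1 f2) p) ^ 2

/-- The Preschwarzian Pf = Z(ln J_F). -/
def PS (f1 f2 : Heis → ℝ) (p : Heis) : ℂ := ZD (Cplx (fun q => Real.log (JF f1 f2 q))) p

/-- The map (f₁,f₂,f₃) packaged as a map Heis → Heis. -/
def Fmap (f1 f2 f3 : Heis → ℝ) (p : Heis) : Heis := (f1 p, f2 p, f3 p)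

/-!
With `[X, Y] = -4T` central, the system `X²v = Y²v`, `XYv = -YXv` reads `X²v = Y²v`, `YXv = 2Tv`,
`XYv = -2Tv`, and it is inherited by `Tv`. Commuting derivatives gives `X(X²v) = -6YTv` and
`Y(X²v) = 6XTv`, and then `[X, Y](X²v) = 12X²Tv`; since the left side is `-4X²Tv`, `X²Tv = 0`.
Hence every derivative of `T²v`, `XTv`, `YTv`, `Tv`, `X²v`, `Xv`, `Yv`, `v` along `X` and `Y` is a
combination of the preceding functions, so a solution is determined by the values of these
eight functions at a single point, and the eight-parameter polynomials realise all such values.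
-/

open VectorField

section HorizontalFields

variable {E F : Type*} [NormedAddCommGroup E] [NormedSpace ℝ E]
  [NormedAddCommGroup F] [NormedSpace ℝ F] {u w : Heis → E}

/-- The vector field `X` as a map, so that `XD` is differentiation along it. -/
def xField (p : Heis) : Heis := (1, 0, 2 * p.2.1)

/-- The vector field `Y` as a map, so that `YD` is differentiation along it. -/
def yField (p : Heis) : Heis := (0, 1, -(2 * p.1))

/-- The vector field `T` as a map, so that `TD` is differentiation along it. -/
def tField (_ : Heis) : Heis := (0, 0, 1)

theorem contDiff_xField {n : WithTop ℕ∞} : ContDiff ℝ n xField := by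
  unfold xField; fun_prop

theorem contDiff_yField {n : WithTop ℕ∞} : ContDiff ℝ n yField := by
  unfold yField; fun_prop

theorem contDiff_tField {n : WithTop ℕ∞} : ContDiff ℝ n tField :=
  contDiff_const

theorem fderiv_coord_x (p w : Heis) : fderiv ℝ (fun q : Heis => q.1) p w = w.1 := by
  rw [fderiv_fst]; rfl

theorem fderiv_coord_y (p w : Heis) : fderiv ℝ (fun q : Heis => q.2.1) p w = w.2.1 := by
  rw [hasFDerivAt_snd.fst.fderiv]; rfl

theorem fderiv_coord_t (p w : Heis) : fderiv ℝ (fun q : Heis => q.2.2) p w = w.2.2 := by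
  rw [hasFDerivAt_snd.snd.fderiv]; rfl

theorem fderiv_xField (p w : Heis) : fderiv ℝ xField p w = (0, 0, 2 * w.2.1) := by
  unfold xField
  simp (disch := fun_prop) [DifferentiableAt.fderiv_prodMk, fderiv_const_mul, fderiv_coord_y]

theorem fderiv_yField (p w : Heis) : fderiv ℝ yField p w = (0, 0, -(2 * w.1)) := by
  unfold yField
  simp (disch := fun_prop) [DifferentiableAt.fderiv_prodMk, fderiv_const_mul, fderiv_coord_x]

theorem fderiv_tField (p w : Heis) : fderiv ℝ tField p w = 0 := by
  rw [show tField = fun _ => (0, 0, 1) from rfl]; simp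

theorem lieBracket_xField_yField : lieBracket ℝ xField yField = (-4 : ℝ) • tField := by
  ext p <;> simp [lieBracket, fderiv_xField, fderiv_yField, xField, yField, tField]
  norm_num

theorem lieBracket_xField_tField : lieBracket ℝ xField tField = 0 := by
  ext p <;> simp [lieBracket, fderiv_xField, fderiv_tField, tField]

theorem lieBracket_yField_tField : lieBracket ℝ yField tField = 0 := by
  ext p <;> simp [lieBracket, fderiv_yField, fderiv_tField, tField]

theorem fderiv_commutator_eq_fderiv_lieBracket {V W : F → F} {f : F → E} {p : F}
    (hf : ContDiffAt ℝ 2 f p) (hV : DifferentiableAt ℝ V p) (hW : DifferentiableAt ℝ W p) :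
    fderiv ℝ (fun q => fderiv ℝ f q (W q)) p (V p) - fderiv ℝ (fun q => fderiv ℝ f q (V q)) p (W p)
      = fderiv ℝ f p (lieBracket ℝ V W p) :=
  (fderiv_apply_lieBracket_of_isSymmSndFDerivAt hf (hf.isSymmSndFDerivAt (by simp)) hW hV).symm

theorem XD_YD (hu : ContDiff ℝ 2 u) : XD (YD u) = YD (XD u) - (4 : ℝ) • TD u := by
  funext p
  have h : XD (YD u) p - YD (XD u) p = fderiv ℝ u p (lieBracket ℝ xField yField p) :=
    fderiv_commutator_eq_fderiv_lieBracket hu.contDiffAt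
      (contDiff_xField.differentiable one_ne_zero p)
      (contDiff_yField.differentiable one_ne_zero p)
  have hT : fderiv ℝ u p (lieBracket ℝ xField yField p) = (-4 : ℝ) • TD u p := by
    rw [lieBracket_xField_yField, Pi.smul_apply, map_smul]; rfl
  simp only [Pi.sub_apply, Pi.smul_apply]
  linear_combination (norm := module) h + hT

theorem XD_TD (hu : ContDiff ℝ 2 u) : XD (TD u) = TD (XD u) := by
  funext p
  have h : XD (TD u) p - TD (XD u) p = fderiv ℝ u p (lieBracket ℝ xField tField p) :=
    fderiv_commutator_eq_fderiv_lieBracket hu.contDiffAt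
      (contDiff_xField.differentiable one_ne_zero p)
      (contDiff_tField.differentiable one_ne_zero p)
  rwa [lieBracket_xField_tField, Pi.zero_apply, map_zero, sub_eq_zero] at h

theorem YD_TD (hu : ContDiff ℝ 2 u) : YD (TD u) = TD (YD u) := by
  funext p
  have h : YD (TD u) p - TD (YD u) p = fderiv ℝ u p (lieBracket ℝ yField tField p) :=
    fderiv_commutator_eq_fderiv_lieBracket hu.contDiffAt
      (contDiff_yField.differentiable one_ne_zero p)
      (contDiff_tField.differentiable one_ne_zero p)
  rwa [lieBracket_yField_tField, Pi.zero_apply, map_zero, sub_eq_zero] at h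

theorem contDiff_XD {m n : WithTop ℕ∞} (hu : ContDiff ℝ n u) (hmn : m + 1 ≤ n) :
    ContDiff ℝ m (XD u) :=
  (hu.fderiv_right hmn).clm_apply contDiff_xField

theorem contDiff_YD {m n : WithTop ℕ∞} (hu : ContDiff ℝ n u) (hmn : m + 1 ≤ n) :
    ContDiff ℝ m (YD u) :=
  (hu.fderiv_right hmn).clm_apply contDiff_yField

theorem contDiff_TD {m n : WithTop ℕ∞} (hu : ContDiff ℝ n u) (hmn : m + 1 ≤ n) :
    ContDiff ℝ m (TD u) :=
  (hu.fderiv_right hmn).clm_apply contDiff_tField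

theorem differentiable_XD (hu : ContDiff ℝ 2 u) : Differentiable ℝ (XD u) :=
  (contDiff_XD hu one_add_one_eq_two.le).differentiable one_ne_zero

theorem differentiable_YD (hu : ContDiff ℝ 2 u) : Differentiable ℝ (YD u) :=
  (contDiff_YD hu one_add_one_eq_two.le).differentiable one_ne_zero

theorem differentiable_TD (hu : ContDiff ℝ 2 u) : Differentiable ℝ (TD u) :=
  (contDiff_TD hu one_add_one_eq_two.le).differentiable one_ne_zero

theorem XD_zero : XD (0 : Heis → E) = 0 := by
  funext p; simp [XD]

theorem YD_zero : YD (0 : Heis → E) = 0 := by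
  funext p; simp [YD]

theorem TD_neg (u : Heis → E) : TD (-u) = -TD u := by
  funext p; simp [TD, fderiv_neg]

theorem XD_sub (hu : Differentiable ℝ u) (hw : Differentiable ℝ w) :
    XD (u - w) = XD u - XD w := by
  funext p; simp [XD, fderiv_sub (hu p) (hw p)]

theorem YD_sub (hu : Differentiable ℝ u) (hw : Differentiable ℝ w) :
    YD (u - w) = YD u - YD w := by
  funext p; simp [YD, fderiv_sub (hu p) (hw p)]

theorem TD_sub (hu : Differentiable ℝ u) (hw : Differentiable ℝ w) :
    TD (u - w) = TD u - TD w := by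
  funext p; simp [TD, fderiv_sub (hu p) (hw p)]

section ConstSMul

variable {R : Type*} [DivisionSemiring R] [Module R E] [SMulCommClass ℝ R E]
  [ContinuousConstSMul R E]

theorem XD_const_smul (c : R) (u : Heis → E) : XD (c • u) = c • XD u := by
  funext p; simp [XD, fderiv_const_smul_field]

theorem YD_const_smul (c : R) (u : Heis → E) : YD (c • u) = c • YD u := by
  funext p; simp [YD, fderiv_const_smul_field]

end ConstSMul

theorem fderiv_apply_eq_XD_add_YD_add_TD (u : Heis → E) (p w : Heis) :
    fderiv ℝ u p w = w.1 • XD u p + w.2.1 • YD u p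
      + (w.2.2 - 2 * p.2.1 * w.1 + 2 * p.1 * w.2.1) • TD u p := by
  simp only [XD, YD, TD, ← map_smul, ← map_add]
  congr 1
  ext <;> simp; ring

theorem eq_zero_of_XD_eq_zero_of_YD_eq_zero (hu : ContDiff ℝ 2 u) (hX : XD u = 0)
    (hY : YD u = 0) {p : Heis} (hp : u p = 0) : u = 0 := by
  have hT : TD u = 0 := by simpa [hX, hY, XD_zero, YD_zero] using XD_YD hu
  have hD (q : Heis) : fderiv ℝ u q = 0 := by
    refine ContinuousLinearMap.ext fun w => ?_
    simp [fderiv_apply_eq_XD_add_YD_add_TD, hX, hY, hT]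
  funext q
  exact (is_const_of_fderiv_eq_zero (hu.differentiable two_ne_zero) hD q p).trans hp

end HorizontalFields

section Rigidity

variable {E : Type*} [NormedAddCommGroup E] [NormedSpace ℝ E] {v w : Heis → E} {p : Heis}

/-- The second-order system `X²v = Y²v`, `XYv = -YXv` characterising the potentials `v` of contact
conformal vector fields on the Heisenberg group. -/
structure IsConformalPotential (v : Heis → E) : Prop where
  XD_XD_eq_YD_YD : XD (XD v) = YD (YD v)
  XD_YD_eq_neg_YD_XD : XD (YD v) = -YD (XD v)

theorem isConformalPotential_iff :
    IsConformalPotential v ↔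
      ∀ p, XD (XD v) p = YD (YD v) p ∧ XD (YD v) p = -(YD (XD v) p) :=
  ⟨fun h p => ⟨congrFun h.XD_XD_eq_YD_YD p, congrFun h.XD_YD_eq_neg_YD_XD p⟩,
    fun h => ⟨funext fun p => (h p).1, funext fun p => (h p).2⟩⟩

/-- The derivatives at `p` which determine a conformal potential. -/
def conformalJet (v : Heis → E) (p : Heis) : Fin 8 → E :=
  ![v p, XD v p, YD v p, TD v p, XD (XD v) p, XD (TD v) p, YD (TD v) p, TD (TD v) p]

theorem conformalJet_sub (hv : ContDiff ℝ 2 v) (hw : ContDiff ℝ 2 w) (p : Heis) :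
    conformalJet (v - w) p = conformalJet v p - conformalJet w p := by
  have hv₁ := hv.differentiable two_ne_zero
  have hw₁ := hw.differentiable two_ne_zero
  have hXv := differentiable_XD hv
  have hXw := differentiable_XD hw
  have hTv := differentiable_TD hv
  have hTw := differentiable_TD hw
  simp [conformalJet, XD_sub hv₁ hw₁, YD_sub hv₁ hw₁, TD_sub hv₁ hw₁, XD_sub hXv hXw,
    XD_sub hTv hTw, YD_sub hTv hTw, TD_sub hTv hTw]

namespace IsConformalPotential

theorem sub (hv : IsConformalPotential v) (hw : IsConformalPotential w) (hv₂ : ContDiff ℝ 2 v)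
    (hw₂ : ContDiff ℝ 2 w) : IsConformalPotential (v - w) := by
  have hv₁ := hv₂.differentiable two_ne_zero
  have hw₁ := hw₂.differentiable two_ne_zero
  have hXv := differentiable_XD hv₂
  have hXw := differentiable_XD hw₂
  have hYv := differentiable_YD hv₂
  have hYw := differentiable_YD hw₂
  constructor
  · rw [XD_sub hv₁ hw₁, YD_sub hv₁ hw₁, XD_sub hXv hXw, YD_sub hYv hYw, hv.XD_XD_eq_YD_YD,
      hw.XD_XD_eq_YD_YD]
  · rw [XD_sub hv₁ hw₁, YD_sub hv₁ hw₁, XD_sub hYv hYw, YD_sub hXv hXw, hv.XD_YD_eq_neg_YD_XD,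
      hw.XD_YD_eq_neg_YD_XD, neg_sub_neg, neg_sub]

theorem YD_XD_eq_smul_TD (h : IsConformalPotential v) (hv : ContDiff ℝ 2 v) :
    YD (XD v) = (2 : ℝ) • TD v := by
  linear_combination (norm := module) (1 / 2 : ℝ) • (h.XD_YD_eq_neg_YD_XD - XD_YD hv)

theorem XD_YD_eq_smul_TD (h : IsConformalPotential v) (hv : ContDiff ℝ 2 v) :
    XD (YD v) = (-2 : ℝ) • TD v := by
  rw [h.XD_YD_eq_neg_YD_XD, h.YD_XD_eq_smul_TD hv, neg_smul]

protected theorem TD (h : IsConformalPotential v) (hv : ContDiff ℝ 3 v) :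
    IsConformalPotential (TD v) := by
  have hv₂ : ContDiff ℝ 2 v := hv.of_le (by norm_num)
  have hX : ContDiff ℝ 2 (XD v) := contDiff_XD hv (by norm_num)
  have hY : ContDiff ℝ 2 (YD v) := contDiff_YD hv (by norm_num)
  constructor
  · rw [XD_TD hv₂, XD_TD hX, h.XD_XD_eq_YD_YD, ← YD_TD hY, ← YD_TD hv₂]
  · rw [YD_TD hv₂, XD_TD hY, h.XD_YD_eq_neg_YD_XD, TD_neg, ← YD_TD hX, ← XD_TD hv₂]

theorem XD_XD_XD_eq_smul (h : IsConformalPotential v) (hv : ContDiff ℝ 3 v) :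
    XD (XD (XD v)) = (-6 : ℝ) • YD (TD v) := by
  have hv₂ : ContDiff ℝ 2 v := hv.of_le (by norm_num)
  calc XD (XD (XD v)) = XD (YD (YD v)) := by rw [h.XD_XD_eq_YD_YD]
    _ = YD (XD (YD v)) - (4 : ℝ) • TD (YD v) := XD_YD (contDiff_YD hv (by norm_num))
    _ = (-2 : ℝ) • YD (TD v) - (4 : ℝ) • YD (TD v) := by
      rw [h.XD_YD_eq_smul_TD hv₂, YD_const_smul, YD_TD hv₂]
    _ = (-6 : ℝ) • YD (TD v) := by module

theorem YD_XD_XD_eq_smul (h : IsConformalPotential v) (hv : ContDiff ℝ 3 v) :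
    YD (XD (XD v)) = (6 : ℝ) • XD (TD v) := by
  have hv₂ : ContDiff ℝ 2 v := hv.of_le (by norm_num)
  calc YD (XD (XD v)) = XD (YD (XD v)) + (4 : ℝ) • TD (XD v) := by
        rw [XD_YD (contDiff_XD hv (by norm_num)), sub_add_cancel]
    _ = (2 : ℝ) • XD (TD v) + (4 : ℝ) • XD (TD v) := by
      rw [h.YD_XD_eq_smul_TD hv₂, XD_const_smul, XD_TD hv₂]
    _ = (6 : ℝ) • XD (TD v) := by module

theorem XD_XD_TD_eq_zero (h : IsConformalPotential v) (hv : ContDiff ℝ 4 v) :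
    XD (XD (TD v)) = 0 := by
  have hv₃ : ContDiff ℝ 3 v := hv.of_le (by norm_num)
  have hX : ContDiff ℝ 3 (XD v) := contDiff_XD hv (by norm_num)
  have hcomm : XD (YD (XD (XD v))) = YD (XD (XD (XD v))) - (4 : ℝ) • TD (XD (XD v)) :=
    XD_YD (contDiff_XD hX (by norm_num))
  rw [h.YD_XD_XD_eq_smul hv₃, h.XD_XD_XD_eq_smul hv₃, XD_const_smul, YD_const_smul,
    ← (h.TD hv₃).XD_XD_eq_YD_YD, ← XD_TD (hX.of_le (by norm_num)),
    ← XD_TD (hv.of_le (by norm_num))] at hcomm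
  linear_combination (norm := module) (1 / 16 : ℝ) • hcomm

theorem eq_zero_of_TD_eq_zero (h : IsConformalPotential v) (hv : ContDiff ℝ 3 v)
    (hXX : XD (XD v) = 0) (hT : TD v = 0) (hp : v p = 0) (hXp : XD v p = 0) (hYp : YD v p = 0) :
    v = 0 := by
  have hv₂ : ContDiff ℝ 2 v := hv.of_le (by norm_num)
  have hX : XD v = 0 := eq_zero_of_XD_eq_zero_of_YD_eq_zero (contDiff_XD hv (by norm_num)) hXX
    (by rw [h.YD_XD_eq_smul_TD hv₂, hT, smul_zero]) hXp
  have hY : YD v = 0 := eq_zero_of_XD_eq_zero_of_YD_eq_zero (contDiff_YD hv (by norm_num))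
    (by rw [h.XD_YD_eq_smul_TD hv₂, hT, smul_zero]) (by rw [← h.XD_XD_eq_YD_YD, hXX]) hYp
  exact eq_zero_of_XD_eq_zero_of_YD_eq_zero hv₂ hX hY hp

theorem eq_zero_of_conformalJet_eq_zero (h : IsConformalPotential v) (hv : ContDiff ℝ 4 v)
    (hp : conformalJet v p = 0) : v = 0 := by
  have hv₃ : ContDiff ℝ 3 v := hv.of_le (by norm_num)
  have hTv : ContDiff ℝ 3 (TD v) := contDiff_TD hv (by norm_num)
  have hXXT : XD (XD (TD v)) = 0 := h.XD_XD_TD_eq_zero hv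
  have hT_conf : IsConformalPotential (TD v) := h.TD hv₃
  obtain ⟨h0, hX0, hY0, hT0, hXX0, hXT0, hYT0, hTT0⟩ : v p = 0 ∧ XD v p = 0 ∧ YD v p = 0 ∧
      TD v p = 0 ∧ XD (XD v) p = 0 ∧ XD (TD v) p = 0 ∧ YD (TD v) p = 0 ∧ TD (TD v) p = 0 := by
    simpa [conformalJet] using hp
  have hTT : TD (TD v) = 0 := by
    refine eq_zero_of_XD_eq_zero_of_YD_eq_zero (contDiff_TD hTv (by norm_num)) ?_ ?_ hTT0
    · simpa [hXXT, YD_zero] using (hT_conf.YD_XD_XD_eq_smul hTv).symm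
    · simpa [hXXT, XD_zero] using (hT_conf.XD_XD_XD_eq_smul hTv).symm
  have hT : TD v = 0 := hT_conf.eq_zero_of_TD_eq_zero hTv hXXT hTT hT0 hXT0 hYT0
  have hXX : XD (XD v) = 0 := by
    refine eq_zero_of_XD_eq_zero_of_YD_eq_zero
      (contDiff_XD (contDiff_XD hv (m := 3) (by norm_num)) (by norm_num)) ?_ ?_ hXX0
    · rw [h.XD_XD_XD_eq_smul hv₃, hT, YD_zero, smul_zero]
    · rw [h.YD_XD_XD_eq_smul hv₃, hT, XD_zero, smul_zero]
  exact h.eq_zero_of_TD_eq_zero hv₃ hXX hT h0 hX0 hY0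

theorem eq_of_conformalJet_eq (hv : IsConformalPotential v) (hw : IsConformalPotential w)
    (hv₄ : ContDiff ℝ 4 v) (hw₄ : ContDiff ℝ 4 w) (hp : conformalJet v p = conformalJet w p) :
    v = w := by
  have hv₂ : ContDiff ℝ 2 v := hv₄.of_le (by norm_num)
  have hw₂ : ContDiff ℝ 2 w := hw₄.of_le (by norm_num)
  refine sub_eq_zero.mp ((hv.sub hw hv₂ hw₂).eq_zero_of_conformalJet_eq_zero (p := p)
    (hv₄.sub hw₄) ?_)
  rw [conformalJet_sub hv₂ hw₂, hp, sub_self]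

end IsConformalPotential

end Rigidity

section Polynomials

/-- The eight-parameter family of polynomial potentials. -/
def conformalPolynomial (c1 c2 c3 c4 c5 c6 c7 c8 : ℝ) (p : Heis) : ℝ :=
  c1 * (p.1 ^ 4 + 2 * p.1 ^ 2 * p.2.1 ^ 2 + p.2.1 ^ 4 + p.2.2 ^ 2)
    + c2 * (p.2.2 * p.2.1 - p.1 * p.2.1 ^ 2 - p.1 ^ 3)
    + c3 * (p.2.2 * p.1 + p.1 ^ 2 * p.2.1 + p.2.1 ^ 3)
    + c4 * (p.1 ^ 2 + p.2.1 ^ 2) + c5 * p.1 + c6 * p.2.1 + c7 * p.2.2 + c8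

variable (c1 c2 c3 c4 c5 c6 c7 c8 : ℝ)

theorem contDiff_conformalPolynomial {n : WithTop ℕ∞} :
    ContDiff ℝ n (conformalPolynomial c1 c2 c3 c4 c5 c6 c7 c8) := by
  unfold conformalPolynomial; fun_prop

attribute [local simp] XD YD TD fderiv_fun_add fderiv_fun_sub fderiv_const_mul fderiv_fun_mul
  fderiv_fun_pow fderiv_coord_x fderiv_coord_y fderiv_coord_t

theorem XD_conformalPolynomial :
    XD (conformalPolynomial c1 c2 c3 c4 c5 c6 c7 c8) = fun p =>
      4 * c1 * (p.1 * (p.1 ^ 2 + p.2.1 ^ 2) + p.2.1 * p.2.2) + c2 * (p.2.1 ^ 2 - 3 * p.1 ^ 2)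
        + c3 * (p.2.2 + 4 * (p.1 * p.2.1)) + 2 * c4 * p.1 + 2 * c7 * p.2.1 + c5 := by
  unfold conformalPolynomial
  funext p
  simp (disch := fun_prop)
  ring

theorem YD_conformalPolynomial :
    YD (conformalPolynomial c1 c2 c3 c4 c5 c6 c7 c8) = fun p =>
      4 * c1 * (p.2.1 * (p.1 ^ 2 + p.2.1 ^ 2) - p.1 * p.2.2) + c2 * (p.2.2 - 4 * (p.1 * p.2.1))
        + c3 * (3 * p.2.1 ^ 2 - p.1 ^ 2) + 2 * c4 * p.2.1 - 2 * c7 * p.1 + c6 := by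
  unfold conformalPolynomial
  funext p
  simp (disch := fun_prop)
  ring

theorem TD_conformalPolynomial :
    TD (conformalPolynomial c1 c2 c3 c4 c5 c6 c7 c8) = fun p =>
      2 * c1 * p.2.2 + c2 * p.2.1 + c3 * p.1 + c7 := by
  unfold conformalPolynomial
  funext p
  simp (disch := fun_prop)
  ring

theorem isConformalPotential_conformalPolynomial :
    IsConformalPotential (conformalPolynomial c1 c2 c3 c4 c5 c6 c7 c8) := by
  constructor <;>
  · rw [XD_conformalPolynomial, YD_conformalPolynomial]
    funext p
    simp (disch := fun_prop)
    ring

theorem conformalJet_conformalPolynomial_zero :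
    conformalJet (conformalPolynomial c1 c2 c3 c4 c5 c6 c7 c8) 0
      = ![c8, c5, c6, c7, 2 * c4, c3, c2, 2 * c1] := by
  rw [conformalJet, XD_conformalPolynomial, YD_conformalPolynomial, TD_conformalPolynomial]
  simp (disch := fun_prop) [conformalPolynomial]
  norm_num

theorem IsConformalPotential.eq_conformalPolynomial {v : Heis → ℝ} (h : IsConformalPotential v)
    (hv : ContDiff ℝ 4 v) :
    v = conformalPolynomial (TD (TD v) 0 / 2) (YD (TD v) 0) (XD (TD v) 0) (XD (XD v) 0 / 2)
      (XD v 0) (YD v 0) (TD v 0) (v 0) := by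
  refine h.eq_of_conformalJet_eq (isConformalPotential_conformalPolynomial ..) hv
    (contDiff_conformalPolynomial ..) (p := 0) ?_
  rw [conformalJet_conformalPolynomial_zero]
  simp [conformalJet, mul_div_cancel₀]

end Polynomials

section Complexification

theorem ZD_eq_smul (f : Heis → ℂ) : ZD f = (1 / 2 : ℂ) • (XD f - I • YD f) := by
  funext p
  simp [ZD, div_eq_inv_mul]

theorem ZD_ZD {f : Heis → ℂ} (hf : ContDiff ℝ 2 f) :
    ZD (ZD f) = (1 / 4 : ℂ) • (XD (XD f) - YD (YD f) - I • (XD (YD f) + YD (XD f))) := by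
  have hX := differentiable_XD hf
  have hY := differentiable_YD hf
  rw [ZD_eq_smul, ZD_eq_smul f, XD_const_smul, YD_const_smul, XD_sub hX (hY.const_smul I),
    YD_sub hX (hY.const_smul I), XD_const_smul, YD_const_smul]
  funext p
  simp only [Pi.smul_apply, Pi.sub_apply, Pi.add_apply, smul_eq_mul]
  linear_combination (1 / 4 : ℂ) * YD (YD f) p * I_sq

theorem contDiff_Cplx {n : WithTop ℕ∞} {u : Heis → ℝ} (hu : ContDiff ℝ n u) :
    ContDiff ℝ n (Cplx u) :=
  ofRealCLM.contDiff.comp hu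

theorem fderiv_Cplx {u : Heis → ℝ} (hu : Differentiable ℝ u) (p w : Heis) :
    fderiv ℝ (Cplx u) p w = fderiv ℝ u p w := by
  have h : HasFDerivAt (Cplx u) _ p := ofRealCLM.hasFDerivAt.comp p (hu p).hasFDerivAt
  rw [h.fderiv]; simp

theorem XD_Cplx {u : Heis → ℝ} (hu : Differentiable ℝ u) : XD (Cplx u) = Cplx (XD u) :=
  funext fun p => fderiv_Cplx hu p _

theorem YD_Cplx {u : Heis → ℝ} (hu : Differentiable ℝ u) : YD (Cplx u) = Cplx (YD u) :=
  funext fun p => fderiv_Cplx hu p _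

theorem ZD_ZD_Cplx {v : Heis → ℝ} (hv : ContDiff ℝ 2 v) (p : Heis) :
    ZD (ZD (Cplx v)) p
      = (((XD (XD v) p - YD (YD v) p : ℝ) : ℂ) - I * (XD (YD v) p + YD (XD v) p : ℝ)) / 4 := by
  have hv₁ := hv.differentiable two_ne_zero
  have hX := differentiable_XD hv
  have hY := differentiable_YD hv
  rw [ZD_ZD (contDiff_Cplx hv), XD_Cplx hv₁, YD_Cplx hv₁, XD_Cplx hX, XD_Cplx hY, YD_Cplx hX,
    YD_Cplx hY]
  simp [Cplx, div_eq_inv_mul, mul_add]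

theorem isConformalPotential_iff_ZD_ZD_eq_zero {v : Heis → ℝ} (hv : ContDiff ℝ 2 v) :
    IsConformalPotential v ↔ ∀ p, ZD (ZD (Cplx v)) p = 0 := by
  rw [isConformalPotential_iff]
  refine forall_congr' fun p => ?_
  rw [ZD_ZD_Cplx hv, ← sub_eq_zero (a := XD (XD v) p), eq_neg_iff_add_eq_zero]
  simp [Complex.ext_iff, -neg_add_rev]

end Complexification

theorem stmt_1_general (v0 : Heis → ℝ) (hv0 : ContDiff ℝ 4 v0) :
    ((∀ p : Heis, XD (XD v0) p = YD (YD v0) p ∧ XD (YD v0) p = -(YD (XD v0) p))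
        ↔ (∀ p : Heis, ZD (ZD (Cplx v0)) p = 0)) ∧
    ((∀ p : Heis, ZD (ZD (Cplx v0)) p = 0)
        ↔ ∃ c1 c2 c3 c4 c5 c6 c7 c8 : ℝ, ∀ x y t : ℝ,
            v0 (x, y, t) =
              c1 * (x ^ 4 + 2 * x ^ 2 * y ^ 2 + y ^ 4 + t ^ 2)
              + c2 * (t * y - x * y ^ 2 - x ^ 3)
              + c3 * (t * x + x ^ 2 * y + y ^ 3)
              + c4 * (x ^ 2 + y ^ 2) + c5 * x + c6 * y + c7 * t + c8) := by
  have hZ : IsConformalPotential v0 ↔ ∀ p : Heis, ZD (ZD (Cplx v0)) p = 0 :=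
    isConformalPotential_iff_ZD_ZD_eq_zero (hv0.of_le (by norm_num))
  refine ⟨isConformalPotential_iff.symm.trans hZ, hZ.symm.trans ⟨fun h => ?_, ?_⟩⟩
  · exact ⟨_, _, _, _, _, _, _, _, fun x y t => congrFun (h.eq_conformalPolynomial hv0) (x, y, t)⟩
  · rintro ⟨c1, c2, c3, c4, c5, c6, c7, c8, hc⟩
    have hv : v0 = conformalPolynomial c1 c2 c3 c4 c5 c6 c7 c8 :=
      funext fun p => hc p.1 p.2.1 p.2.2
    exact hv ▸ isConformalPotential_conformalPolynomial ..

/-- characterization of contact conformal vector fields: for smooth v₀,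
(i) X²v₀ = Y²v₀ and XYv₀ = −YXv₀ is equivalent to (ii) Z²v₀ = 0, which is equivalent to
(iii) v₀ being the explicit 8-parameter polynomial. -/
theorem stmt_1 (v0 : Heis → ℝ) (hv0 : ContDiff ℝ (⊤ : ℕ∞) v0) :
    ((∀ p : Heis, XD (XD v0) p = YD (YD v0) p ∧ XD (YD v0) p = -(YD (XD v0) p))
        ↔ (∀ p : Heis, ZD (ZD (Cplx v0)) p = 0)) ∧
    ((∀ p : Heis, ZD (ZD (Cplx v0)) p = 0)
        ↔ ∃ c1 c2 c3 c4 c5 c6 c7 c8 : ℝ, ∀ x y t : ℝ,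
            v0 (x, y, t) =
              c1 * (x ^ 4 + 2 * x ^ 2 * y ^ 2 + y ^ 4 + t ^ 2)
              + c2 * (t * y - x * y ^ 2 - x ^ 3)
              + c3 * (t * x + x ^ 2 * y + y ^ 3)
              + c4 * (x ^ 2 + y ^ 2) + c5 * x + c6 * y + c7 * t + c8) :=
  stmt_1_general v0 (contDiff_infty.mp hv0 4)
end
end

section
/- Let Ω ⊆ ℝ³ be open and let f = (f₁,f₂,f₃) : Ω → ℝ³ be a smooth map satisfying the contact equations with J_F ≠ 0 on Ω, and suppose that on Ω one has Z²(J_F⁻¹) = 0, Z²(J_F⁻¹·F) = 0, Z²(J_F⁻¹·F̄) = 0, and Z²(J_F⁻¹·(f₁² + f₂²)) = 0, where F = f₁ + i f₂. Then ZF · Z(F̄) = 0 on Ω. If moreover J_F > 0 on Ω, then Z̄F = 0 on Ω, i.e. f is conformal. -/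
noncomputable section

open Complex

/-!
The second-order operator `u ↦ Z²u` has the double commutator
`Z²(w u v) - u Z²(w v) - v Z²(w u) + u v Z²w = 2 w (Zu) (Zv)`.
For `w = J_F⁻¹`, `u = F` and `v = F̄` all four terms on the left vanish, so `ZF · Z(F̄) = 0`. Since
`J_F = |ZF|² - |Z̄F|²`, positivity of `J_F` forces `ZF ≠ 0`, whence `Z(F̄)`, the conjugate of `Z̄F`,
vanishes.
-/

section

open scoped ComplexConjugate Topology

section ContDiffAt

variable {E : Type*} [NormedAddCommGroup E] [NormedSpace ℝ E] {m n : WithTop ℕ∞} {p : Heis}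

theorem contDiffAt_XD {u : Heis → E} (hu : ContDiffAt ℝ n u p) (hmn : m + 1 ≤ n) :
    ContDiffAt ℝ m (XD u) p :=
  (hu.fderiv_right hmn).clm_apply (by fun_prop)

theorem contDiffAt_YD {u : Heis → E} (hu : ContDiffAt ℝ n u p) (hmn : m + 1 ≤ n) :
    ContDiffAt ℝ m (YD u) p :=
  (hu.fderiv_right hmn).clm_apply (by fun_prop)

theorem contDiffAt_ZD {u : Heis → ℂ} (hu : ContDiffAt ℝ n u p) (hmn : m + 1 ≤ n) :
    ContDiffAt ℝ m (ZD u) p :=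
  ((contDiffAt_XD hu hmn).sub (contDiffAt_const.mul (contDiffAt_YD hu hmn))).div_const 2

theorem contDiffAt_JF {f1 f2 : Heis → ℝ} (hf1 : ContDiffAt ℝ n f1 p) (hf2 : ContDiffAt ℝ n f2 p)
    (hmn : m + 1 ≤ n) : ContDiffAt ℝ m (JF f1 f2) p :=
  ((contDiffAt_XD hf1 hmn).mul (contDiffAt_YD hf2 hmn)).sub
    ((contDiffAt_YD hf1 hmn).mul (contDiffAt_XD hf2 hmn))

theorem contDiffAt_CF {f1 f2 : Heis → ℝ} (hf1 : ContDiffAt ℝ n f1 p)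
    (hf2 : ContDiffAt ℝ n f2 p) : ContDiffAt ℝ n (CF f1 f2) p :=
  (ofRealCLM.contDiff.contDiffAt.comp p hf1).add
    ((ofRealCLM.contDiff.contDiffAt.comp p hf2).mul contDiffAt_const)

end ContDiffAt

section Leibniz

variable {u v w : Heis → ℂ} {p : Heis}

theorem ZD_congr (h : u =ᶠ[𝓝 p] v) : ZD u p = ZD v p := by
  simp only [ZD, XD, YD, h.fderiv_eq]

theorem ZD_add (hu : DifferentiableAt ℝ u p) (hv : DifferentiableAt ℝ v p) :
    ZD (u + v) p = ZD u p + ZD v p := by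
  simp only [ZD, XD, YD, fderiv_add hu hv, add_apply]
  ring

theorem ZD_mul (hu : DifferentiableAt ℝ u p) (hv : DifferentiableAt ℝ v p) :
    ZD (u * v) p = ZD u p * v p + u p * ZD v p := by
  simp only [ZD, XD, YD, fderiv_mul hu hv, add_apply, smul_apply, smul_eq_mul]
  ring

theorem ZD_ZD_mul (hu : ContDiffAt ℝ 2 u p) (hv : ContDiffAt ℝ 2 v p) :
    ZD (ZD (u * v)) p = ZD (ZD u) p * v p + 2 * ZD u p * ZD v p + u p * ZD (ZD v) p := by
  have leibniz : ZD (u * v) =ᶠ[𝓝 p] ZD u * v + u * ZD v := by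
    filter_upwards [hu.eventually (by simp), hv.eventually (by simp)] with q huq hvq
    exact ZD_mul (huq.differentiableAt two_ne_zero) (hvq.differentiableAt two_ne_zero)
  have hu₀ := hu.differentiableAt two_ne_zero
  have hv₀ := hv.differentiableAt two_ne_zero
  have hu₁ := (contDiffAt_ZD hu one_add_one_eq_two.le).differentiableAt one_ne_zero
  have hv₁ := (contDiffAt_ZD hv one_add_one_eq_two.le).differentiableAt one_ne_zero
  rw [ZD_congr leibniz, ZD_add (hu₁.mul hv₀) (hu₀.mul hv₁), ZD_mul hu₁ hv₀, ZD_mul hu₀ hv₁]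
  ring

theorem ZD_ZD_double_commutator (hw : ContDiffAt ℝ 2 w p) (hu : ContDiffAt ℝ 2 u p)
    (hv : ContDiffAt ℝ 2 v p) :
    ZD (ZD (w * u * v)) p - u p * ZD (ZD (w * v)) p - v p * ZD (ZD (w * u)) p
      + u p * v p * ZD (ZD w) p = 2 * w p * (ZD u p * ZD v p) := by
  have hwu : ContDiffAt ℝ 2 (w * u) p := hw.mul hu
  rw [ZD_ZD_mul hwu hv, ZD_ZD_mul hw hv,
    ZD_mul (hw.differentiableAt two_ne_zero) (hu.differentiableAt two_ne_zero), Pi.mul_apply]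
  ring

theorem ZD_mul_ZD_eq_zero (hw : ContDiffAt ℝ 2 w p) (hu : ContDiffAt ℝ 2 u p)
    (hv : ContDiffAt ℝ 2 v p) (hwp : w p ≠ 0) (h : ZD (ZD w) p = 0)
    (hwu : ZD (ZD (w * u)) p = 0) (hwv : ZD (ZD (w * v)) p = 0)
    (hwuv : ZD (ZD (w * u * v)) p = 0) : ZD u p * ZD v p = 0 := by
  simpa [h, hwu, hwv, hwuv, hwp] using ZD_ZD_double_commutator hw hu hv

end Leibniz

theorem ZD_conj (u : Heis → ℂ) (p : Heis) :
    ZD (fun q => conj (u q)) p = conj (ZbD u p) := by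
  have fderiv_conj : fderiv ℝ (fun q => conj (u q)) p =
      (conjCLE : ℂ →L[ℝ] ℂ).comp (fderiv ℝ u p) := conjCLE.comp_fderiv
  simp [ZD, ZbD, XD, YD, fderiv_conj, sub_eq_add_neg, conj_ofNat]

theorem CF_mul_conj (f1 f2 : Heis → ℝ) (p : Heis) :
    CF f1 f2 p * conj (CF f1 f2 p) = ((f1 p ^ 2 + f2 p ^ 2 : ℝ) : ℂ) := by
  rw [mul_conj, CF, normSq_add_mul_I]

section Jacobian

variable {f1 f2 : Heis → ℝ} {p : Heis}

theorem fderiv_CF_apply (hf1 : DifferentiableAt ℝ f1 p) (hf2 : DifferentiableAt ℝ f2 p)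
    (v : Heis) :
    fderiv ℝ (CF f1 f2) p v = (fderiv ℝ f1 p v : ℂ) + (fderiv ℝ f2 p v : ℂ) * I := by
  have hasFDerivAt_CF : HasFDerivAt (CF f1 f2) _ p :=
    (ofRealCLM.hasFDerivAt.comp p hf1.hasFDerivAt).add
      ((ofRealCLM.hasFDerivAt.comp p hf2.hasFDerivAt).mul_const I)
  simp [hasFDerivAt_CF.fderiv, mul_comm]

theorem ZD_CF (hf1 : DifferentiableAt ℝ f1 p) (hf2 : DifferentiableAt ℝ f2 p) :
    ZD (CF f1 f2) p =
      ((XD f1 p + YD f2 p) / 2 : ℝ) + ((XD f2 p - YD f1 p) / 2 : ℝ) * I := by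
  simp only [ZD, XD, YD, fderiv_CF_apply hf1 hf2]
  push_cast
  linear_combination -(fderiv ℝ f2 p (0, 1, -(2 * p.1)) : ℂ) / 2 * I_sq

theorem ZbD_CF (hf1 : DifferentiableAt ℝ f1 p) (hf2 : DifferentiableAt ℝ f2 p) :
    ZbD (CF f1 f2) p =
      ((XD f1 p - YD f2 p) / 2 : ℝ) + ((XD f2 p + YD f1 p) / 2 : ℝ) * I := by
  simp only [ZbD, XD, YD, fderiv_CF_apply hf1 hf2]
  push_cast
  linear_combination (fderiv ℝ f2 p (0, 1, -(2 * p.1)) : ℂ) / 2 * I_sq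

theorem JF_eq_sq_norm_sub_sq_norm (hf1 : DifferentiableAt ℝ f1 p)
    (hf2 : DifferentiableAt ℝ f2 p) :
    JF f1 f2 p = ‖ZD (CF f1 f2) p‖ ^ 2 - ‖ZbD (CF f1 f2) p‖ ^ 2 := by
  simp only [ZD_CF hf1 hf2, ZbD_CF hf1 hf2, Complex.sq_norm, normSq_add_mul_I, JF]
  ring

theorem ZD_CF_ne_zero_of_JF_pos (hf1 : DifferentiableAt ℝ f1 p) (hf2 : DifferentiableAt ℝ f2 p)
    (hJ : 0 < JF f1 f2 p) : ZD (CF f1 f2) p ≠ 0 := by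
  intro hZ
  rw [JF_eq_sq_norm_sub_sq_norm hf1 hf2, hZ, norm_zero] at hJ
  linarith [sq_nonneg ‖ZbD (CF f1 f2) p‖]

end Jacobian

theorem stmt_2_general {f1 f2 : Heis → ℝ} {p : Heis} (hf1 : ContDiffAt ℝ 3 f1 p)
    (hf2 : ContDiffAt ℝ 3 f2 p) (hJ : JF f1 f2 p ≠ 0)
    (hw : ZD (ZD (fun q => (((JF f1 f2 q)⁻¹ : ℝ) : ℂ))) p = 0)
    (hwF : ZD (ZD (fun q => (((JF f1 f2 q)⁻¹ : ℝ) : ℂ) * CF f1 f2 q)) p = 0)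
    (hwF' : ZD (ZD (fun q => (((JF f1 f2 q)⁻¹ : ℝ) : ℂ) * conj (CF f1 f2 q))) p = 0)
    (hwFF' : ZD (ZD (fun q => (((JF f1 f2 q)⁻¹ * (f1 q ^ 2 + f2 q ^ 2) : ℝ) : ℂ))) p = 0) :
    ZD (CF f1 f2) p * ZD (fun q => conj (CF f1 f2 q)) p = 0 ∧
      (0 < JF f1 f2 p → ZbD (CF f1 f2) p = 0) := by
  have weight_contDiffAt : ContDiffAt ℝ 2 (fun q => (((JF f1 f2 q)⁻¹ : ℝ) : ℂ)) p :=
    ofRealCLM.contDiff.contDiffAt.comp p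
      ((contDiffAt_JF hf1 hf2 two_add_one_eq_three.le).inv hJ)
  have F_contDiffAt : ContDiffAt ℝ 2 (CF f1 f2) p :=
    (contDiffAt_CF hf1 hf2).of_le (by norm_num)
  have product_eq_zero : ZD (CF f1 f2) p * ZD (fun q => conj (CF f1 f2 q)) p = 0 := by
    refine ZD_mul_ZD_eq_zero weight_contDiffAt F_contDiffAt
      (conjCLE.contDiff.contDiffAt.comp p F_contDiffAt) (by simpa using hJ) hw hwF hwF' ?_
    convert hwFF' using 3
    funext q
    rw [ofReal_mul, ← CF_mul_conj, ← mul_assoc]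
    rfl
  refine ⟨product_eq_zero, fun hJ_pos => ?_⟩
  have ZF_ne_zero := ZD_CF_ne_zero_of_JF_pos (hf1.differentiableAt three_ne_zero)
    (hf2.differentiableAt three_ne_zero) hJ_pos
  simpa [ZD_conj, ZF_ne_zero] using product_eq_zero

end

/-- if a smooth contact map with J_F ≠ 0 satisfies Z²(J_F⁻¹) = 0,
Z²(J_F⁻¹F) = 0, Z²(J_F⁻¹F̄) = 0 and Z²(J_F⁻¹(f₁²+f₂²)) = 0 on Ω, then ZF·Z(F̄) = 0 on Ω;
if moreover J_F > 0 on Ω then Z̄F = 0, i.e. f is conformal. -/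
theorem stmt_2 (Ω : Set Heis) (hΩ : IsOpen Ω) (f1 f2 f3 : Heis → ℝ)
    (hf1 : ContDiffOn ℝ (⊤ : ℕ∞) f1 Ω) (hf2 : ContDiffOn ℝ (⊤ : ℕ∞) f2 Ω)
    (hf3 : ContDiffOn ℝ (⊤ : ℕ∞) f3 Ω)
    (hcont : ContactOn f1 f2 f3 Ω) (hJ : ∀ p ∈ Ω, JF f1 f2 p ≠ 0)
    (h8 : ∀ p ∈ Ω, ZD (ZD (fun q => (((JF f1 f2 q)⁻¹ : ℝ) : ℂ))) p = 0)
    (h5 : ∀ p ∈ Ω, ZD (ZD (fun q => (((JF f1 f2 q)⁻¹ : ℝ) : ℂ) * CF f1 f2 q)) p = 0)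
    (h6 : ∀ p ∈ Ω,
      ZD (ZD (fun q => (((JF f1 f2 q)⁻¹ : ℝ) : ℂ) * (starRingEnd ℂ) (CF f1 f2 q))) p = 0)
    (h4 : ∀ p ∈ Ω,
      ZD (ZD (fun q => (((JF f1 f2 q)⁻¹ * (f1 q ^ 2 + f2 q ^ 2) : ℝ) : ℂ))) p = 0) :
    (∀ p ∈ Ω, ZD (CF f1 f2) p * ZD (fun q => (starRingEnd ℂ) (CF f1 f2 q)) p = 0) ∧
    ((∀ p ∈ Ω, 0 < JF f1 f2 p) → ∀ p ∈ Ω, ZbD (CF f1 f2) p = 0) := by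
  have general p (hp : p ∈ Ω) := stmt_2_general
    ((hf1.contDiffAt (hΩ.mem_nhds hp)).of_le ENat.LEInfty.out)
    ((hf2.contDiffAt (hΩ.mem_nhds hp)).of_le ENat.LEInfty.out)
    (hJ p hp) (h8 p hp) (h5 p hp) (h6 p hp) (h4 p hp)
  exact ⟨fun p hp => (general p hp).1, fun hpos p hp => (general p hp).2 (hpos p hp)⟩
end
end

section
/- Let Ω ⊆ ℝ³ be open and let f : Ω → ℝ³ be a smooth conformal map. Then the function φ = (1/2)·ln J_F is CR-pluriharmonic on Ω, i.e. it satisfies Z²Z̄φ = 0 on Ω. -/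
noncomputable section

open Complex

/-!
Work in the commutative `ℂ`-algebra of smooth functions on `Ω`, on which `Z` and `Z̄` are
derivations with `[Z, [Z, Z̄]] = [Z̄, [Z̄, Z]] = 0`. Put `F = f₁ + i f₂`, `H = f₁ - i f₂`,
`a = ZF` and `b = Z̄H`. Conformality says `Z̄F = ZH = 0` and `J_F = ab`; for `g = -i f₃` the
contact equations read `Zg = Ha` and `Z̄g = -Fb`. Evaluating `[Z, [Z, Z̄]] g = 0` yields
`b Za = -2a Zb`, and by symmetry `a Z̄b = -2b Z̄a`. As `2φ = log (ab)`, these say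
`Za / a = 4 Zφ` and `Z̄a / a = -2 Z̄φ`. Compatibility of the two logarithmic derivatives of `a`
with `[Z, [Z, Z̄]] = 0` is then `6 Z²Z̄φ = 0`. Only logarithmic derivatives of `a` occur, so no
branch of `log a` is needed.
-/

section Derivation

variable {R A : Type*} [CommRing R] [CommRing A] [Algebra R A]

/-- The logarithmic derivative `a⁻¹ D a` of a unit `a` with respect to the derivation `D`. -/
def dlog (D : Derivation R A A) (a : Aˣ) : A := ↑a⁻¹ * D a

theorem mul_dlog (D : Derivation R A A) (a : Aˣ) : a * dlog D a = D a :=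
  a.mul_inv_cancel_left _

theorem dlog_mul (D : Derivation R A A) (a b : Aˣ) : dlog D (a * b) = dlog D a + dlog D b := by
  apply (a * b).isUnit.mul_left_cancel
  rw [mul_dlog, Units.val_mul, D.leibniz, smul_eq_mul, smul_eq_mul, ← mul_dlog D a,
    ← mul_dlog D b]
  ring

theorem dlog_add (D₁ D₂ : Derivation R A A) (a : Aˣ) :
    dlog (D₁ + D₂) a = dlog D₁ a + dlog D₂ a :=
  mul_add _ _ _

theorem dlog_sub (D₁ D₂ : Derivation R A A) (a : Aˣ) :
    dlog (D₁ - D₂) a = dlog D₁ a - dlog D₂ a :=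
  mul_sub _ _ _

theorem dlog_smul (r : R) (D : Derivation R A A) (a : Aˣ) : dlog (r • D) a = r • dlog D a :=
  mul_smul_comm _ _ _

theorem dlog_lie (D₁ D₂ : Derivation R A A) (a : Aˣ) :
    dlog ⁅D₁, D₂⁆ a = D₁ (dlog D₂ a) - D₂ (dlog D₁ a) := by
  apply a.isUnit.mul_left_cancel
  rw [mul_dlog, Derivation.commutator_apply, ← mul_dlog D₁ a, ← mul_dlog D₂ a]
  simp only [Derivation.leibniz, smul_eq_mul, ← mul_dlog D₁ a, ← mul_dlog D₂ a]
  ring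

variable {Z W : Derivation R A A}

theorem apply_apply_apply_eq_zero_of_dlog_eq [IsAddTorsionFree A] (hZW : ⁅Z, ⁅Z, W⁆⁆ = 0)
    {a : Aˣ} {φ : A} (hZ : dlog Z a = (4 : ℤ) • Z φ) (hW : dlog W a = (-2 : ℤ) • W φ) :
    Z (Z (W φ)) = 0 := by
  have hφ : ⁅Z, ⁅Z, W⁆⁆ φ = 0 := by rw [hZW, Derivation.zero_apply]
  have ha : dlog ⁅Z, ⁅Z, W⁆⁆ a = 0 := by rw [hZW, dlog, Derivation.zero_apply, mul_zero]
  rw [dlog_lie, dlog_lie, hZ, hW] at ha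
  simp only [Derivation.commutator_apply, map_sub, map_zsmul] at ha hφ
  have h6 : (6 : ℤ) • Z (Z (W φ)) = 0 := by
    linear_combination (exp := 1) (4 : ℤ) • hφ - ha
  exact (IsAddTorsionFree.zsmul_eq_zero_iff_right (by norm_num)).mp h6

/-- The complexified equations of a conformal contact map `(f₁, f₂, f₃)` with respect to the
derivations `Z` and `W = Z̄`: here `F = f₁ + i f₂`, `H = f₁ - i f₂` and `g = -i f₃`. The conjugate
`H` is a separate element, so that no conjugation on the algebra is needed. -/
structure IsConformalContact (Z W : Derivation R A A) (F H g : A) : Prop where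
  antihol : W F = 0
  hol : Z H = 0
  contact : Z g = H * Z F
  anticontact : W g = -(F * W H)

namespace IsConformalContact

variable {F H g : A}

theorem swap (h : IsConformalContact Z W F H g) : IsConformalContact W Z H F (-g) where
  antihol := h.hol
  hol := h.antihol
  contact := by rw [map_neg, h.anticontact, neg_neg]
  anticontact := by rw [map_neg, h.contact]

variable [IsAddTorsionFree A]

theorem apply_apply_mul (h : IsConformalContact Z W F H g) (hZW : ⁅Z, ⁅Z, W⁆⁆ = 0) :
    Z (Z F) * W H = -2 * (Z F * Z (W H)) := by
  have hg : ⁅Z, ⁅Z, W⁆⁆ g = 0 := by rw [hZW, Derivation.zero_apply]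
  have hF : ⁅Z, ⁅Z, W⁆⁆ F = 0 := by rw [hZW, Derivation.zero_apply]
  have hH : ⁅Z, ⁅Z, W⁆⁆ H = 0 := by rw [hZW, Derivation.zero_apply]
  simp only [Derivation.commutator_apply, h.antihol, h.hol, h.contact, h.anticontact, map_neg,
    map_add, map_sub, map_zero, Derivation.leibniz, smul_eq_mul] at hg hF hH
  have h2 : (2 : ℤ) • (Z (Z F) * W H + 2 * (Z F * Z (W H))) = 0 := by
    rw [two_zsmul]
    linear_combination H * hF - F * hH - hg
  linear_combination (IsAddTorsionFree.zsmul_eq_zero_iff_right two_ne_zero).mp h2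

theorem dlog_eq (h : IsConformalContact Z W F H g) (hZW : ⁅Z, ⁅Z, W⁆⁆ = 0) {a b : Aˣ}
    (ha : a = Z F) (hb : b = W H) : dlog Z a = (-2 : ℤ) • dlog Z b := by
  apply (a * b).isUnit.mul_left_cancel
  have key := h.apply_apply_mul hZW
  rw [← ha, ← hb, ← mul_dlog Z a, ← mul_dlog Z b] at key
  rw [Units.val_mul, zsmul_eq_mul]
  push_cast
  linear_combination key

theorem apply_apply_apply_eq_zero (h : IsConformalContact Z W F H g)
    (hZW : ⁅Z, ⁅Z, W⁆⁆ = 0) (hWZ : ⁅W, ⁅W, Z⁆⁆ = 0) {J : Aˣ} {φ : A} (hJ : J = Z F * W H)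
    (hZφ : dlog Z J = (2 : ℤ) • Z φ) (hWφ : dlog W J = (2 : ℤ) • W φ) : Z (Z (W φ)) = 0 := by
  obtain ⟨⟨a, ha⟩, b, hb⟩ := IsUnit.mul_iff.mp (hJ ▸ J.isUnit)
  obtain rfl : J = a * b := Units.ext (by rw [hJ, Units.val_mul, ha, hb])
  have hZb : dlog Z a = (-2 : ℤ) • dlog Z b := h.dlog_eq hZW ha hb
  have hWa : dlog W b = (-2 : ℤ) • dlog W a := h.swap.dlog_eq hWZ hb ha
  rw [dlog_mul] at hZφ hWφ
  apply apply_apply_apply_eq_zero_of_dlog_eq hZW (a := a)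
  · linear_combination (exp := 1) (2 : ℤ) • hZφ - hZb
  · linear_combination (exp := 1) hWa - hWφ

end IsConformalContact

end Derivation

section Wirtinger

variable {L : Type*} [LieRing L] [LieAlgebra ℂ L]

/-- The combination `(x - i y) / 2` of two elements of a complex Lie algebra; for `x = X`, `y = Y`
it is `Z`. -/
def holPart (x y : L) : L := (1 / 2 : ℂ) • (x - I • y)

/-- The combination `(x + i y) / 2` of two elements of a complex Lie algebra; for `x = X`, `y = Y`
it is `Z̄`. -/
def antiholPart (x y : L) : L := (1 / 2 : ℂ) • (x + I • y)

theorem lie_holPart_antiholPart (x y : L) : ⁅holPart x y, antiholPart x y⁆ = (I / 2) • ⁅x, y⁆ := by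
  simp only [holPart, antiholPart, smul_lie, lie_smul, sub_lie, lie_add, lie_self,
    ← lie_skew x y]
  module

theorem lie_holPart_eq_zero {x y z : L} (hx : ⁅x, z⁆ = 0) (hy : ⁅y, z⁆ = 0) :
    ⁅holPart x y, z⁆ = 0 := by
  rw [holPart, smul_lie, sub_lie, smul_lie, hx, hy, smul_zero, sub_zero, smul_zero]

theorem lie_antiholPart_eq_zero {x y z : L} (hx : ⁅x, z⁆ = 0) (hy : ⁅y, z⁆ = 0) :
    ⁅antiholPart x y, z⁆ = 0 := by
  rw [antiholPart, smul_lie, add_lie, smul_lie, hx, hy, smul_zero, add_zero, smul_zero]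

theorem lie_holPart_lie_holPart_antiholPart {x y : L} (hx : ⁅x, ⁅x, y⁆⁆ = 0)
    (hy : ⁅y, ⁅x, y⁆⁆ = 0) : ⁅holPart x y, ⁅holPart x y, antiholPart x y⁆⁆ = 0 := by
  rw [lie_holPart_antiholPart, lie_smul, lie_holPart_eq_zero hx hy, smul_zero]

theorem lie_antiholPart_lie_antiholPart_holPart {x y : L} (hx : ⁅x, ⁅x, y⁆⁆ = 0)
    (hy : ⁅y, ⁅x, y⁆⁆ = 0) : ⁅antiholPart x y, ⁅antiholPart x y, holPart x y⁆⁆ = 0 := by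
  rw [← lie_skew (antiholPart x y) (holPart x y), lie_holPart_antiholPart, lie_neg, lie_smul,
    lie_antiholPart_eq_zero hx hy, smul_zero, neg_zero]

end Wirtinger

section SmoothFunctions

open scoped ContDiff

variable {E : Type*} [NormedAddCommGroup E] [NormedSpace ℝ E]

/-- The algebra of smooth complex functions on the open set `Ω`. Its elements are functions on the
subtype `Ω`, so that equality in the algebra is equality on `Ω`. -/
def smoothFunctions (Ω : TopologicalSpace.Opens E) : Subalgebra ℂ (Ω → ℂ) where
  carrier := {u | ∃ v : E → ℂ, ContDiffOn ℝ ∞ v Ω ∧ ∀ p : Ω, u p = v p}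
  mul_mem' := by
    rintro u₁ u₂ ⟨v₁, hv₁, h₁⟩ ⟨v₂, hv₂, h₂⟩
    exact ⟨v₁ * v₂, hv₁.mul hv₂, fun p => by simp [h₁, h₂]⟩
  add_mem' := by
    rintro u₁ u₂ ⟨v₁, hv₁, h₁⟩ ⟨v₂, hv₂, h₂⟩
    exact ⟨v₁ + v₂, hv₁.add hv₂, fun p => by simp [h₁, h₂]⟩
  algebraMap_mem' c := ⟨fun _ => c, contDiffOn_const, fun _ => rfl⟩

namespace smoothFunctions

variable {Ω : TopologicalSpace.Opens E}

instance : IsAddTorsionFree (smoothFunctions Ω) := .of_module_rat _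

/-- The restriction to `Ω` of a function that is smooth on `Ω`, as an element of the algebra. -/
def restrict (u : E → ℂ) (hu : ContDiffOn ℝ ∞ u Ω) : smoothFunctions Ω :=
  ⟨fun p => u p, u, hu, fun _ => rfl⟩

@[simp]
theorem restrict_apply {u : E → ℂ} (hu : ContDiffOn ℝ ∞ u Ω) (p : Ω) :
    (restrict u hu).1 p = u p := rfl

theorem exists_restrict_eq (u : smoothFunctions Ω) : ∃ v hv, restrict v hv = u := by
  obtain ⟨u, v, hv, h⟩ := u
  exact ⟨v, hv, Subtype.ext (funext fun p => (h p).symm)⟩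

theorem differentiableAt_of_contDiffOn {F : Type*} [NormedAddCommGroup F] [NormedSpace ℝ F]
    {u : E → F} (hu : ContDiffOn ℝ ∞ u Ω) (p : Ω) : DifferentiableAt ℝ u p :=
  (hu.contDiffAt (Ω.isOpen.mem_nhds p.2)).differentiableAt (by simp)

theorem contDiffOn_fderiv_apply {F : Type*} [NormedAddCommGroup F] [NormedSpace ℝ F]
    {u : E → F} (hu : ContDiffOn ℝ ∞ u Ω) {V : E → E} (hV : ContDiffOn ℝ ∞ V Ω) :
    ContDiffOn ℝ ∞ (fun p => fderiv ℝ u p (V p)) Ω :=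
  (hu.fderiv_of_isOpen Ω.isOpen (by simp)).clm_apply hV

theorem fderiv_eq_of_restrict_eq {u v : E → ℂ} {hu : ContDiffOn ℝ ∞ u Ω}
    {hv : ContDiffOn ℝ ∞ v Ω} (h : restrict u hu = restrict v hv) (p : Ω) :
    fderiv ℝ u p = fderiv ℝ v p := by
  have huv : Set.EqOn u v Ω := fun q hq => congrFun (congrArg Subtype.val h) ⟨q, hq⟩
  exact (huv.eventuallyEq_of_mem (Ω.isOpen.mem_nhds p.2)).fderiv_eq

/-- Differentiation along the vector field `V`, computed on an arbitrarily chosen extension. -/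
def along (V : E → E) (hV : ContDiffOn ℝ ∞ V Ω) (u : smoothFunctions Ω) : smoothFunctions Ω :=
  restrict _ (contDiffOn_fderiv_apply (exists_restrict_eq u).choose_spec.choose hV)

theorem along_restrict {V : E → E} (hV : ContDiffOn ℝ ∞ V Ω) {u : E → ℂ}
    (hu : ContDiffOn ℝ ∞ u Ω) :
    along V hV (restrict u hu) = restrict _ (contDiffOn_fderiv_apply hu hV) := by
  ext p
  have h := (exists_restrict_eq (restrict u hu)).choose_spec.choose_spec
  exact DFunLike.congr_fun (fderiv_eq_of_restrict_eq h p) (V p)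

/-- The derivation of `smoothFunctions Ω` given by differentiation along the vector field `V`. -/
def derivAlong (V : E → E) (hV : ContDiffOn ℝ ∞ V Ω) :
    Derivation ℂ (smoothFunctions Ω) (smoothFunctions Ω) :=
  Derivation.mk'
    { toFun := along V hV
      map_add' u₁ u₂ := by
        obtain ⟨v₁, hv₁, rfl⟩ := exists_restrict_eq u₁
        obtain ⟨v₂, hv₂, rfl⟩ := exists_restrict_eq u₂
        have : restrict v₁ hv₁ + restrict v₂ hv₂ = restrict (v₁ + v₂) (hv₁.add hv₂) := rfl
        ext p
        simp [this, along_restrict, fderiv_add (differentiableAt_of_contDiffOn hv₁ p)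
          (differentiableAt_of_contDiffOn hv₂ p)]
      map_smul' c u := by
        obtain ⟨v, hv, rfl⟩ := exists_restrict_eq u
        have : c • restrict v hv = restrict (c • v) (hv.const_smul c) := rfl
        ext p
        simp [this, along_restrict, fderiv_const_smul (differentiableAt_of_contDiffOn hv p)] }
    fun u₁ u₂ => by
      obtain ⟨v₁, hv₁, rfl⟩ := exists_restrict_eq u₁
      obtain ⟨v₂, hv₂, rfl⟩ := exists_restrict_eq u₂
      have : restrict v₁ hv₁ * restrict v₂ hv₂ = restrict (v₁ * v₂) (hv₁.mul hv₂) := rfl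
      ext p
      simp [this, along_restrict, fderiv_mul (differentiableAt_of_contDiffOn hv₁ p)
        (differentiableAt_of_contDiffOn hv₂ p)]

theorem derivAlong_restrict {V : E → E} (hV : ContDiffOn ℝ ∞ V Ω) {u : E → ℂ}
    (hu : ContDiffOn ℝ ∞ u Ω) :
    derivAlong V hV (restrict u hu) = restrict _ (contDiffOn_fderiv_apply hu hV) :=
  along_restrict hV hu

theorem derivAlong_zero (h0 : ContDiffOn ℝ ∞ (0 : E → E) Ω) : derivAlong 0 h0 = 0 := by
  ext u p
  obtain ⟨v, hv, rfl⟩ := exists_restrict_eq u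
  rw [derivAlong_restrict]
  exact map_zero _

theorem contDiffOn_lieBracket {V W : E → E} (hV : ContDiffOn ℝ ∞ V Ω)
    (hW : ContDiffOn ℝ ∞ W Ω) : ContDiffOn ℝ ∞ (VectorField.lieBracket ℝ V W) Ω :=
  (contDiffOn_fderiv_apply hW hV).sub (contDiffOn_fderiv_apply hV hW)

theorem lie_derivAlong {V W : E → E} (hV : ContDiffOn ℝ ∞ V Ω) (hW : ContDiffOn ℝ ∞ W Ω) :
    ⁅derivAlong V hV, derivAlong W hW⁆
      = derivAlong (VectorField.lieBracket ℝ V W) (contDiffOn_lieBracket hV hW) := by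
  ext u p
  obtain ⟨v, hv, rfl⟩ := exists_restrict_eq u
  have hs : minSmoothness ℝ 2 ≤ (∞ : WithTop ℕ∞) := by
    rw [minSmoothness_of_isRCLikeNormedField]
    exact WithTop.coe_le_coe.mpr le_top
  simpa [Derivation.commutator_apply, derivAlong_restrict] using
    (VectorField.fderiv_apply_lieBracket (hv.contDiffAt (Ω.isOpen.mem_nhds p.2)) hs
      (differentiableAt_of_contDiffOn hW p) (differentiableAt_of_contDiffOn hV p)).symm

/-- A smooth real function on `Ω`, viewed as a complex one. -/
def ofReal (f : E → ℝ) (hf : ContDiffOn ℝ ∞ f Ω) : smoothFunctions Ω :=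
  restrict (ofRealCLM ∘ f) (ofRealCLM.contDiff.comp_contDiffOn hf)

@[simp]
theorem ofReal_apply {f : E → ℝ} (hf : ContDiffOn ℝ ∞ f Ω) (p : Ω) :
    (ofReal f hf).1 p = f p := rfl

theorem derivAlong_ofReal {V : E → E} (hV : ContDiffOn ℝ ∞ V Ω) {f : E → ℝ}
    (hf : ContDiffOn ℝ ∞ f Ω) :
    derivAlong V hV (ofReal f hf) = ofReal _ (contDiffOn_fderiv_apply hf hV) := by
  ext p
  rw [ofReal, derivAlong_restrict]
  have h := ofRealCLM.hasFDerivAt.comp p.1 (differentiableAt_of_contDiffOn hf p).hasFDerivAt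
  exact DFunLike.congr_fun h.fderiv (V p)

/-- A nowhere vanishing smooth real function, as a unit of the algebra. -/
def unitOfReal (f : E → ℝ) (hf : ContDiffOn ℝ ∞ f Ω) (h0 : ∀ p ∈ Ω, f p ≠ 0) :
    (smoothFunctions Ω)ˣ :=
  .mkOfMulEqOne (ofReal f hf) (ofReal (fun p => (f p)⁻¹) (hf.inv h0)) <| by
    ext p
    simp [h0 p p.2]

theorem dlog_unitOfReal {V : E → E} (hV : ContDiffOn ℝ ∞ V Ω) {f : E → ℝ}
    (hf : ContDiffOn ℝ ∞ f Ω) (h0 : ∀ p ∈ Ω, f p ≠ 0) :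
    dlog (derivAlong V hV) (unitOfReal f hf h0)
      = derivAlong V hV (ofReal (fun p => Real.log (f p)) (hf.log h0)) := by
  apply (unitOfReal f hf h0).isUnit.mul_left_cancel
  rw [mul_dlog]
  ext p
  have hp : (f p : ℂ) ≠ 0 := ofReal_ne_zero.mpr (h0 p p.2)
  simp [unitOfReal, derivAlong_ofReal, fderiv.log (differentiableAt_of_contDiffOn hf p) (h0 p p.2),
    mul_inv_cancel_left₀ hp]

end smoothFunctions

end SmoothFunctions

section Heisenberg

open smoothFunctions
open scoped ContDiff

/-- The vector field whose associated derivation is `XD`. -/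
def fieldX (p : Heis) : Heis := (1, 0, 2 * p.2.1)

/-- The vector field whose associated derivation is `YD`. -/
def fieldY (p : Heis) : Heis := (0, 1, -(2 * p.1))

theorem contDiff_fieldX : ContDiff ℝ ∞ fieldX := by unfold fieldX; fun_prop

theorem contDiff_fieldY : ContDiff ℝ ∞ fieldY := by unfold fieldY; fun_prop

theorem fderiv_fieldX (p v : Heis) : fderiv ℝ fieldX p v = (0, 0, 2 * v.2.1) := by
  have hy : HasFDerivAt (fun q : Heis => q.2.1) _ p :=
    (ContinuousLinearMap.fst ℝ ℝ ℝ ∘L ContinuousLinearMap.snd ℝ ℝ (ℝ × ℝ)).hasFDerivAt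
  have h : HasFDerivAt fieldX _ p := (hasFDerivAt_const (1 : ℝ) p).prodMk
    ((hasFDerivAt_const (0 : ℝ) p).prodMk (hy.const_mul 2))
  rw [h.fderiv]
  simp

theorem fderiv_fieldY (p v : Heis) : fderiv ℝ fieldY p v = (0, 0, -(2 * v.1)) := by
  have hx : HasFDerivAt (fun q : Heis => q.1) _ p :=
    (ContinuousLinearMap.fst ℝ ℝ (ℝ × ℝ)).hasFDerivAt
  have h : HasFDerivAt fieldY _ p := (hasFDerivAt_const (0 : ℝ) p).prodMk
    ((hasFDerivAt_const (1 : ℝ) p).prodMk (hx.const_mul 2).fun_neg)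
  rw [h.fderiv]
  simp

theorem lieBracket_fieldX_fieldY :
    VectorField.lieBracket ℝ fieldX fieldY = fun _ => (0, 0, -4) := by
  ext p <;> norm_num [VectorField.lieBracket, fderiv_fieldX, fderiv_fieldY, fieldX, fieldY]

theorem lieBracket_fieldX_vertical (c : ℝ) :
    VectorField.lieBracket ℝ fieldX (fun _ => (0, 0, c)) = 0 := by
  ext p <;> simp [VectorField.lieBracket, fderiv_fieldX]

theorem lieBracket_fieldY_vertical (c : ℝ) :
    VectorField.lieBracket ℝ fieldY (fun _ => (0, 0, c)) = 0 := by
  ext p <;> simp [VectorField.lieBracket, fderiv_fieldY]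

variable (Ω : TopologicalSpace.Opens Heis)

/-- `X` as a derivation of the algebra of smooth functions. -/
def derivX : Derivation ℂ (smoothFunctions Ω) (smoothFunctions Ω) :=
  derivAlong fieldX contDiff_fieldX.contDiffOn

/-- `Y` as a derivation of the algebra of smooth functions. -/
def derivY : Derivation ℂ (smoothFunctions Ω) (smoothFunctions Ω) :=
  derivAlong fieldY contDiff_fieldY.contDiffOn

/-- `Z` as a derivation of the algebra of smooth functions. -/
def derivZ : Derivation ℂ (smoothFunctions Ω) (smoothFunctions Ω) :=
  holPart (derivX Ω) (derivY Ω)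

/-- `Z̄` as a derivation of the algebra of smooth functions. -/
def derivZb : Derivation ℂ (smoothFunctions Ω) (smoothFunctions Ω) :=
  antiholPart (derivX Ω) (derivY Ω)

theorem lie_derivX_lie_derivX_derivY : ⁅derivX Ω, ⁅derivX Ω, derivY Ω⁆⁆ = 0 := by
  simp only [derivX, derivY, lie_derivAlong, lieBracket_fieldX_fieldY, lieBracket_fieldX_vertical,
    derivAlong_zero]

theorem lie_derivY_lie_derivX_derivY : ⁅derivY Ω, ⁅derivX Ω, derivY Ω⁆⁆ = 0 := by
  simp only [derivX, derivY, lie_derivAlong, lieBracket_fieldX_fieldY, lieBracket_fieldY_vertical,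
    derivAlong_zero]

theorem lie_derivZ_lie_derivZ_derivZb : ⁅derivZ Ω, ⁅derivZ Ω, derivZb Ω⁆⁆ = 0 :=
  lie_holPart_lie_holPart_antiholPart (lie_derivX_lie_derivX_derivY Ω)
    (lie_derivY_lie_derivX_derivY Ω)

theorem lie_derivZb_lie_derivZb_derivZ : ⁅derivZb Ω, ⁅derivZb Ω, derivZ Ω⁆⁆ = 0 :=
  lie_antiholPart_lie_antiholPart_holPart (lie_derivX_lie_derivX_derivY Ω)
    (lie_derivY_lie_derivX_derivY Ω)

variable {Ω}

theorem derivZ_apply (u : smoothFunctions Ω) (p : Ω) :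
    (derivZ Ω u).1 p = ((derivX Ω u).1 p - I * (derivY Ω u).1 p) / 2 := by
  simp [derivZ, holPart, div_eq_inv_mul]

theorem derivZb_apply (u : smoothFunctions Ω) (p : Ω) :
    (derivZb Ω u).1 p = ((derivX Ω u).1 p + I * (derivY Ω u).1 p) / 2 := by
  simp [derivZb, antiholPart, div_eq_inv_mul, mul_add]

theorem contDiffOn_ZD {u : Heis → ℂ} (hu : ContDiffOn ℝ ∞ u Ω) : ContDiffOn ℝ ∞ (ZD u) Ω :=
  ((contDiffOn_fderiv_apply hu contDiff_fieldX.contDiffOn).sub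
    (contDiffOn_const.mul (contDiffOn_fderiv_apply hu contDiff_fieldY.contDiffOn))).div_const 2

theorem contDiffOn_ZbD {u : Heis → ℂ} (hu : ContDiffOn ℝ ∞ u Ω) : ContDiffOn ℝ ∞ (ZbD u) Ω :=
  ((contDiffOn_fderiv_apply hu contDiff_fieldX.contDiffOn).add
    (contDiffOn_const.mul (contDiffOn_fderiv_apply hu contDiff_fieldY.contDiffOn))).div_const 2

theorem derivZ_restrict {u : Heis → ℂ} (hu : ContDiffOn ℝ ∞ u Ω) :
    derivZ Ω (restrict u hu) = restrict (ZD u) (contDiffOn_ZD hu) := by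
  ext p
  rw [derivZ_apply, derivX, derivY, derivAlong_restrict, derivAlong_restrict]
  rfl

theorem derivZb_restrict {u : Heis → ℂ} (hu : ContDiffOn ℝ ∞ u Ω) :
    derivZb Ω (restrict u hu) = restrict (ZbD u) (contDiffOn_ZbD hu) := by
  ext p
  rw [derivZb_apply, derivX, derivY, derivAlong_restrict, derivAlong_restrict]
  rfl

theorem derivZ_ofReal_apply {f : Heis → ℝ} (hf : ContDiffOn ℝ ∞ f Ω) (p : Ω) :
    (derivZ Ω (ofReal f hf)).1 p = (XD f p - I * YD f p) / 2 := by
  rw [derivZ_apply, derivX, derivY, derivAlong_ofReal, derivAlong_ofReal]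
  rfl

theorem derivZb_ofReal_apply {f : Heis → ℝ} (hf : ContDiffOn ℝ ∞ f Ω) (p : Ω) :
    (derivZb Ω (ofReal f hf)).1 p = (XD f p + I * YD f p) / 2 := by
  rw [derivZb_apply, derivX, derivY, derivAlong_ofReal, derivAlong_ofReal]
  rfl

theorem derivZ_ofReal_add_smul_ofReal_apply {f₁ f₂ : Heis → ℝ} (hf₁ : ContDiffOn ℝ ∞ f₁ Ω)
    (hf₂ : ContDiffOn ℝ ∞ f₂ Ω) (c : ℂ) (p : Ω) :
    (derivZ Ω (ofReal f₁ hf₁ + c • ofReal f₂ hf₂)).1 p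
      = (XD f₁ p - I * YD f₁ p) / 2 + c * ((XD f₂ p - I * YD f₂ p) / 2) := by
  rw [map_add, Derivation.map_smul, ← derivZ_ofReal_apply hf₁, ← derivZ_ofReal_apply hf₂]
  rfl

theorem derivZb_ofReal_add_smul_ofReal_apply {f₁ f₂ : Heis → ℝ} (hf₁ : ContDiffOn ℝ ∞ f₁ Ω)
    (hf₂ : ContDiffOn ℝ ∞ f₂ Ω) (c : ℂ) (p : Ω) :
    (derivZb Ω (ofReal f₁ hf₁ + c • ofReal f₂ hf₂)).1 p
      = (XD f₁ p + I * YD f₁ p) / 2 + c * ((XD f₂ p + I * YD f₂ p) / 2) := by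
  rw [map_add, Derivation.map_smul, ← derivZb_ofReal_apply hf₁, ← derivZb_ofReal_apply hf₂]
  rfl

theorem dlog_derivZ_unitOfReal {f : Heis → ℝ} (hf : ContDiffOn ℝ ∞ f Ω)
    (h0 : ∀ p ∈ Ω, f p ≠ 0) :
    dlog (derivZ Ω) (unitOfReal f hf h0)
      = derivZ Ω (ofReal (fun p => Real.log (f p)) (hf.log h0)) := by
  have hX : dlog (derivX Ω) (unitOfReal f hf h0) = _ := dlog_unitOfReal _ hf h0
  have hY : dlog (derivY Ω) (unitOfReal f hf h0) = _ := dlog_unitOfReal _ hf h0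
  rw [derivZ, holPart, dlog_smul, dlog_sub, dlog_smul, hX, hY]
  rfl

theorem dlog_derivZb_unitOfReal {f : Heis → ℝ} (hf : ContDiffOn ℝ ∞ f Ω)
    (h0 : ∀ p ∈ Ω, f p ≠ 0) :
    dlog (derivZb Ω) (unitOfReal f hf h0)
      = derivZb Ω (ofReal (fun p => Real.log (f p)) (hf.log h0)) := by
  have hX : dlog (derivX Ω) (unitOfReal f hf h0) = _ := dlog_unitOfReal _ hf h0
  have hY : dlog (derivY Ω) (unitOfReal f hf h0) = _ := dlog_unitOfReal _ hf h0
  rw [derivZb, antiholPart, dlog_smul, dlog_add, dlog_smul, hX, hY]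
  rfl

theorem eq_rotation_of_conformal {x₁ x₂ y₁ y₂ : ℝ} (hJ : 0 < x₁ * y₂ - y₁ * x₂)
    (hn : x₁ ^ 2 + x₂ ^ 2 = y₁ ^ 2 + y₂ ^ 2) (ho : x₁ * y₁ + x₂ * y₂ = 0) :
    y₁ = -x₂ ∧ y₂ = x₁ := by
  have h : (x₁ * y₂ - y₁ * x₂) ^ 2 = (x₁ ^ 2 + x₂ ^ 2) ^ 2 := by
    linear_combination (-(x₁ ^ 2 + x₂ ^ 2)) * hn - (x₁ * y₁ + x₂ * y₂) * ho
  have h' : x₁ * y₂ - y₁ * x₂ = x₁ ^ 2 + x₂ ^ 2 :=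
    (sq_eq_sq₀ hJ.le (by positivity)).mp h
  have hsum : (y₁ + x₂) ^ 2 + (y₂ - x₁) ^ 2 = 0 := by linear_combination -hn - 2 * h'
  obtain ⟨h₁, h₂⟩ := (add_eq_zero_iff_of_nonneg (sq_nonneg _) (sq_nonneg _)).mp hsum
  exact ⟨eq_neg_of_add_eq_zero_left (sq_eq_zero_iff.mp h₁), sub_eq_zero.mp (sq_eq_zero_iff.mp h₂)⟩

namespace ConformalOn

variable {f1 f2 f3 : Heis → ℝ}

theorem jF_ne_zero (h : ConformalOn f1 f2 f3 Ω) : ∀ p ∈ Ω, JF f1 f2 p ≠ 0 := by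
  obtain ⟨-, -, -, -, hJ, -⟩ := h
  exact fun p hp => (hJ p hp).ne'

theorem yD_eq (h : ConformalOn f1 f2 f3 Ω) {p : Heis} (hp : p ∈ Ω) :
    YD f1 p = -XD f2 p ∧ YD f2 p = XD f1 p := by
  obtain ⟨-, -, -, -, hJ, hc⟩ := h
  exact eq_rotation_of_conformal (hJ p hp) (hc p hp).1 (hc p hp).2

theorem xD_thd_eq (h : ConformalOn f1 f2 f3 Ω) {p : Heis} (hp : p ∈ Ω) :
    XD f3 p = 2 * (f2 p * XD f1 p - f1 p * XD f2 p) := by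
  obtain ⟨-, -, -, hcontact, -⟩ := h
  linear_combination (hcontact p hp).1

theorem yD_thd_eq (h : ConformalOn f1 f2 f3 Ω) {p : Heis} (hp : p ∈ Ω) :
    YD f3 p = -2 * (f1 p * XD f1 p + f2 p * XD f2 p) := by
  obtain ⟨hY1, hY2⟩ := h.yD_eq hp
  obtain ⟨-, -, -, hcontact, -⟩ := h
  have h3 := (hcontact p hp).2
  rw [hY1, hY2] at h3
  linear_combination h3

theorem contDiffOn_jF (h : ConformalOn f1 f2 f3 Ω) : ContDiffOn ℝ ∞ (JF f1 f2) Ω := by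
  obtain ⟨h1, h2, -⟩ := h
  have hX := contDiff_fieldX.contDiffOn (s := (Ω : Set Heis))
  have hY := contDiff_fieldY.contDiffOn (s := (Ω : Set Heis))
  exact ((contDiffOn_fderiv_apply h1 hX).mul (contDiffOn_fderiv_apply h2 hY)).sub
    ((contDiffOn_fderiv_apply h1 hY).mul (contDiffOn_fderiv_apply h2 hX))

/-- The function `f₁ + i f₂` on `Ω`, that is, `CF f1 f2`. -/
def horizontal (h : ConformalOn f1 f2 f3 Ω) : smoothFunctions Ω :=
  ofReal f1 h.1 + I • ofReal f2 h.2.1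

/-- The function `f₁ - i f₂` on `Ω`, the conjugate of `horizontal`. -/
def horizontalConj (h : ConformalOn f1 f2 f3 Ω) : smoothFunctions Ω :=
  ofReal f1 h.1 + -I • ofReal f2 h.2.1

theorem horizontal_apply (h : ConformalOn f1 f2 f3 Ω) (p : Ω) :
    h.horizontal.1 p = f1 p + I * f2 p := rfl

theorem horizontalConj_apply (h : ConformalOn f1 f2 f3 Ω) (p : Ω) :
    h.horizontalConj.1 p = f1 p + -I * f2 p := rfl

theorem derivZ_horizontal_apply (h : ConformalOn f1 f2 f3 Ω) (p : Ω) :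
    (derivZ Ω h.horizontal).1 p = (XD f1 p : ℝ) + I * (XD f2 p : ℝ) := by
  rw [horizontal, derivZ_ofReal_add_smul_ofReal_apply, (h.yD_eq p.2).1, (h.yD_eq p.2).2]
  push_cast
  linear_combination (-((XD f1 p : ℝ) : ℂ) / 2) * I_sq

theorem derivZb_horizontalConj_apply (h : ConformalOn f1 f2 f3 Ω) (p : Ω) :
    (derivZb Ω h.horizontalConj).1 p = (XD f1 p : ℝ) - I * (XD f2 p : ℝ) := by
  rw [horizontalConj, derivZb_ofReal_add_smul_ofReal_apply, (h.yD_eq p.2).1, (h.yD_eq p.2).2]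
  push_cast
  linear_combination (-((XD f1 p : ℝ) : ℂ) / 2) * I_sq

theorem derivZb_horizontal (h : ConformalOn f1 f2 f3 Ω) : derivZb Ω h.horizontal = 0 := by
  ext p
  rw [horizontal, derivZb_ofReal_add_smul_ofReal_apply, (h.yD_eq p.2).1, (h.yD_eq p.2).2]
  simp only [ZeroMemClass.coe_zero, Pi.zero_apply]
  push_cast
  linear_combination (((XD f1 p : ℝ) : ℂ) / 2) * I_sq

theorem derivZ_horizontalConj (h : ConformalOn f1 f2 f3 Ω) : derivZ Ω h.horizontalConj = 0 := by
  ext p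
  rw [horizontalConj, derivZ_ofReal_add_smul_ofReal_apply, (h.yD_eq p.2).1, (h.yD_eq p.2).2]
  simp only [ZeroMemClass.coe_zero, Pi.zero_apply]
  push_cast
  linear_combination (((XD f1 p : ℝ) : ℂ) / 2) * I_sq

theorem isConformalContact (h : ConformalOn f1 f2 f3 Ω) :
    IsConformalContact (derivZ Ω) (derivZb Ω) h.horizontal h.horizontalConj
      (-I • ofReal f3 h.2.2.1) where
  antihol := h.derivZb_horizontal
  hol := h.derivZ_horizontalConj
  contact := by
    ext p
    rw [Derivation.map_smul]
    change -I * (derivZ Ω (ofReal f3 h.2.2.1)).1 p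
      = h.horizontalConj.1 p * (derivZ Ω h.horizontal).1 p
    rw [derivZ_ofReal_apply, h.xD_thd_eq p.2, h.yD_thd_eq p.2, horizontalConj_apply,
      derivZ_horizontal_apply]
    push_cast
    linear_combination -(f1 p * ((XD f1 p : ℝ) : ℂ)) * I_sq
  anticontact := by
    ext p
    rw [Derivation.map_smul]
    change -I * (derivZb Ω (ofReal f3 h.2.2.1)).1 p
      = -(h.horizontal.1 p * (derivZb Ω h.horizontalConj).1 p)
    rw [derivZb_ofReal_apply, h.xD_thd_eq p.2, h.yD_thd_eq p.2, horizontal_apply,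
      derivZb_horizontalConj_apply]
    push_cast
    linear_combination (f1 p * ((XD f1 p : ℝ) : ℂ)) * I_sq

theorem unitOfReal_jF_eq (h : ConformalOn f1 f2 f3 Ω) :
    (unitOfReal (JF f1 f2) h.contDiffOn_jF h.jF_ne_zero : smoothFunctions Ω)
      = derivZ Ω h.horizontal * derivZb Ω h.horizontalConj := by
  ext p
  change ((JF f1 f2 p : ℝ) : ℂ)
    = (derivZ Ω h.horizontal).1 p * (derivZb Ω h.horizontalConj).1 p
  rw [derivZ_horizontal_apply, derivZb_horizontalConj_apply, JF, (h.yD_eq p.2).1,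
    (h.yD_eq p.2).2]
  push_cast
  linear_combination ((XD f2 p : ℝ) : ℂ) ^ 2 * I_sq

theorem derivZ_derivZ_derivZb_half_log_jF (h : ConformalOn f1 f2 f3 Ω) :
    derivZ Ω (derivZ Ω (derivZb Ω (ofReal (fun p => 1 / 2 * Real.log (JF f1 f2 p))
      (contDiffOn_const.mul (h.contDiffOn_jF.log h.jF_ne_zero))))) = 0 := by
  set φ := ofReal (fun p => 1 / 2 * Real.log (JF f1 f2 p))
    (contDiffOn_const.mul (h.contDiffOn_jF.log h.jF_ne_zero))
  have hφ : ofReal (fun p => Real.log (JF f1 f2 p)) (h.contDiffOn_jF.log h.jF_ne_zero)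
      = (2 : ℤ) • φ := by
    ext p
    rw [two_zsmul]
    simp only [AddMemClass.coe_add, Pi.add_apply, ofReal_apply, φ]
    push_cast
    ring
  apply h.isConformalContact.apply_apply_apply_eq_zero (lie_derivZ_lie_derivZ_derivZb Ω)
    (lie_derivZb_lie_derivZb_derivZ Ω) h.unitOfReal_jF_eq
  · rw [dlog_derivZ_unitOfReal, hφ, map_zsmul]
  · rw [dlog_derivZb_unitOfReal, hφ, map_zsmul]

end ConformalOn

end Heisenberg

/-- for a smooth conformal map f, the function φ = (1/2)·ln J_F is
CR-pluriharmonic on Ω, i.e. Z²Z̄φ = 0 on Ω. -/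
theorem stmt_4 (Ω : Set Heis) (hΩ : IsOpen Ω) (f1 f2 f3 : Heis → ℝ)
    (hconf : ConformalOn f1 f2 f3 Ω) :
    ∀ p ∈ Ω, ZD (ZD (ZbD (Cplx (fun q => (1 / 2) * Real.log (JF f1 f2 q))))) p = 0 := by
  intro p hp
  let U : TopologicalSpace.Opens Heis := ⟨Ω, hΩ⟩
  have hφ := ConformalOn.derivZ_derivZ_derivZb_half_log_jF (Ω := U) hconf
  rw [smoothFunctions.ofReal, derivZb_restrict, derivZ_restrict, derivZ_restrict] at hφ
  exact congrFun (congrArg Subtype.val hφ) ⟨p, hp⟩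
end
end
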